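/- arXiv:2307.15211 — 4 statements merged into one kernel-verified Lean document; each statement's English description precedes it below -/
import Mathlib

section
/- (Classification of surfaces via caravans, chord-diagram form.) Every chord diagram σ of order n can be transformed by a finite sequence of slide moves and rotations (replacing a diagram τ by r ∘ τ ∘ r⁻¹) into the caravan C_{k,g}, where g = g(σ) is the genus of the one-vertex ribbon graph of σ and k = c(r ∘ σ) − 1 is one less than its number of boundary components; in particular k + 2g = n. -/
/-- Number of cycles (orbits, counting fixed points) of a self-map:
the number of connected components of its functional graph. For a permutation
this is the number of cycles, counting fixed points. -/
noncomputable def cycles {α : Type*} (f : α → α) : ℕ :=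
  Nat.card (Quot fun i j => f i = j)

-- `restrictTo σ A` agrees with `σ` on `A` and fixes everything else.
-- If `A` is the set of endpoints of a set of chords of `σ`, this is `σ_A`.
open Classical in
noncomputable def restrictTo {α : Type*} (f : α → α) (A : Set α) : α → α :=
  fun i => if i ∈ A then f i else i

/-- The rotation `i ↦ i + 1` of the `2n` points of a chord diagram. -/
def rot (n : ℕ) : ZMod (2 * n) → ZMod (2 * n) := fun i => i + 1

/-- Genus of the partial dual of the chord diagram `σ` relative to the set of
chords whose endpoint set is the (`σ`-invariant) set `A`. -/
noncomputable def pdGenus (n : ℕ) (σ : ZMod (2 * n) → ZMod (2 * n))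
    (A : Set (ZMod (2 * n))) : ℕ :=
  (n + 2 - cycles (rot n ∘ restrictTo σ A) - cycles (rot n ∘ restrictTo σ Aᶜ)) / 2

/-- Genus of the one-vertex ribbon graph of the chord diagram `σ`. -/
noncomputable def genus (n : ℕ) (σ : ZMod (2 * n) → ZMod (2 * n)) : ℕ :=
  (n + 1 - cycles (rot n ∘ σ)) / 2

/-- The partial-dual genus polynomial `∂Γ_σ(z) = Σ_A z^{g_A(σ)}`, the sum being
over all sets `A` of chords of `σ` (encoded as `σ`-invariant subsets of the
`2n` points). -/
noncomputable def pdPoly (n : ℕ) (σ : ZMod (2 * n) → ZMod (2 * n)) : Polynomial ℤ :=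
  if h : n = 0 then 1 else
    haveI : NeZero (2 * n) := ⟨by omega⟩
    ∑ A ∈ Finset.univ.filter (fun A : Finset (ZMod (2 * n)) => ∀ i ∈ A, σ i ∈ A),
      Polynomial.X ^ pdGenus n σ (↑A : Set (ZMod (2 * n)))

/-- `φ : ZMod (2n-1) → ZMod (2n)` is the cyclic-order-preserving identification of
the `2n-1` configuration points with the complement of the inserted point `x`:
it avoids `x` and each step advances by one position on the circle, skipping `x`. -/
def IsInsertion {m N : ℕ} (φ : ZMod m → ZMod N) (x : ZMod N) : Prop :=
  φ 0 ≠ x ∧ ∀ j, φ (j + 1) = if φ j + 1 = x then φ j + 2 else φ j + 1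

/-- A configuration of `2n-1` marked points on the circle: a distinguished chord
`c = {p, q}`, a distinguished unpaired point `u`, and a fixed-point-free pairing
of the remaining `2n-4` points into background chords; all encoded by the
involution `τ` whose unique fixed point is `u` and with `τ p = q`. -/
def IsConfig (n : ℕ) (τ : ZMod (2 * n - 1) → ZMod (2 * n - 1))
    (p q u : ZMod (2 * n - 1)) : Prop :=
  Function.Involutive τ ∧ τ p = q ∧ p ≠ q ∧ τ u = u ∧ ∀ j, τ j = j → j = u

/-- `D` is the chord diagram of order `n` obtained from the configuration `τ`
by inserting the extra point `x` (via the order-preserving identification `φ`)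
together with the new chord `c' = {x, u}`; all other chords are unchanged. -/
def IsInsertedDiagram (n : ℕ) (τ : ZMod (2 * n - 1) → ZMod (2 * n - 1))
    (u : ZMod (2 * n - 1)) (φ : ZMod (2 * n - 1) → ZMod (2 * n)) (x : ZMod (2 * n))
    (D : ZMod (2 * n) → ZMod (2 * n)) : Prop :=
  IsInsertion φ x ∧ (∀ j, j ≠ u → D (φ j) = φ (τ j)) ∧ D (φ u) = x ∧ D x = φ u

/-- The caravan `C_{k,g}` of `k` "one-humped camels" and `g` "two-humped camels":
the chord diagram of order `n = k + 2g` on `ZMod (2n)` whose chords are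
`{2i, 2i+1}` for `0 ≤ i < k` together with `{2k+4j, 2k+4j+2}` and
`{2k+4j+1, 2k+4j+3}` for `0 ≤ j < g`. -/
def caravan (n k g : ℕ) : ZMod (2 * n) → ZMod (2 * n) := fun a =>
  if a.val < 2 * k then (if a.val % 2 = 0 then a + 1 else a - 1)
  else if (a.val - 2 * k) % 4 < 2 then a + 2 else a - 2

/-- A slide move: `σ'` is obtained from `σ` by sliding a chord `e = {x, u}` along a
chord `c = {p, q}`, i.e. moving the endpoint `x` of `e` from the position immediately
preceding `p` to the position immediately following `q`. -/
def SlideMove (n : ℕ) (σ σ' : ZMod (2 * n) → ZMod (2 * n)) : Prop :=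
  ∃ (τ : ZMod (2 * n - 1) → ZMod (2 * n - 1)) (p q u : ZMod (2 * n - 1))
    (φ φ' : ZMod (2 * n - 1) → ZMod (2 * n)) (x x' : ZMod (2 * n)),
    IsConfig n τ p q u ∧
    IsInsertedDiagram n τ u φ x σ ∧ x + 1 = φ p ∧
    IsInsertedDiagram n τ u φ' x' σ' ∧ x' = φ' q + 1

/-- A rotation move: replacing the diagram `σ` by `r ∘ σ ∘ r⁻¹`. -/
def RotMove (n : ℕ) (σ σ' : ZMod (2 * n) → ZMod (2 * n)) : Prop :=
  ∀ i, σ' i = σ (i - 1) + 1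

open Relation

namespace CD

/-- Moves on words (labels of the points, read around the circle). -/
inductive Step : List ℕ → List ℕ → Prop
  | rot (a : ℕ) (l : List ℕ) : Step (l ++ [a]) (a :: l)
  | slide (a c : ℕ) (A B : List ℕ) (h : a ≠ c) (hB : B ≠ []) :
      Step (a :: c :: A ++ c :: B) (c :: A ++ c :: a :: B)
  | slide' (a c : ℕ) (A B : List ℕ) (h : a ≠ c) (hB : B ≠ []) :
      Step (c :: A ++ c :: a :: B) (a :: c :: A ++ c :: B)

abbrev R := ReflTransGen Step

theorem R.app_comm (l₁ l₂ : List ℕ) : R (l₁ ++ l₂) (l₂ ++ l₁) := by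
  induction l₂ using List.reverseRecOn generalizing l₁ with
  | nil => simpa using ReflTransGen.refl
  | append_singleton l a ih =>
    have h := Step.rot a (l₁ ++ l)
    have h2 := ih (a :: l₁)
    refine ReflTransGen.head (b := a :: l₁ ++ l) (by simpa using h) ?_
    simpa using h2

theorem Step.symm {w w' : List ℕ} (h : Step w w') : R w' w := by
  cases h with
  | rot a l => exact R.app_comm [a] l
  | slide a c A B h hB => exact .single (.slide' a c A B h hB)
  | slide' a c A B h hB => exact .single (.slide a c A B h hB)

theorem R.symm {w w' : List ℕ} (h : R w w') : R w' w := by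
  induction h with
  | refl => exact .refl
  | tail _ h ih => exact h.symm.trans ih

theorem Step.perm {w w' : List ℕ} (h : Step w w') : w.Perm w' := by
  cases h <;> (rw [List.perm_iff_count]; intro x; simp [List.count_cons]; try omega)

theorem R.perm {w w' : List ℕ} (h : R w w') : w.Perm w' := by
  induction h with
  | refl => exact .refl _
  | tail _ h ih => exact ih.trans h.perm

theorem R.s0 {a c : ℕ} (A B : List ℕ) (h : a ≠ c) :
    R (a :: c :: A ++ c :: B) (c :: A ++ c :: a :: B) := by
  by_cases hB : B = []
  · subst hB
    simpa using R.app_comm [a] (c :: A ++ [c])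
  · exact .single (.slide a c A B h hB)

theorem R.s1 {a c : ℕ} (P A B : List ℕ) (h : a ≠ c) :
    R (P ++ a :: c :: A ++ c :: B) (P ++ c :: A ++ c :: a :: B) := by
  have h1 := R.app_comm P (a :: c :: A ++ c :: B)
  have h2 := R.s0 A (B ++ P) h
  have h3 := R.app_comm (c :: A ++ c :: a :: B) P
  simp only [List.append_assoc, List.cons_append] at *
  exact h1.trans (h2.trans h3)

theorem R.s2 {a c : ℕ} (P A B : List ℕ) (h : a ≠ c) :
    R (P ++ c :: A ++ a :: c :: B) (P ++ c :: a :: A ++ c :: B) := by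
  have h1 := R.app_comm (P ++ c :: A) (a :: c :: B)
  have h2 := R.s0 (B ++ P) A h
  have h3 := R.app_comm (c :: B) (P ++ c :: a :: A)
  simp only [List.append_assoc, List.cons_append] at *
  exact h1.trans (h2.trans h3)

/-- Blocks: isolated chords and handles. -/
def IsBlock (b : List ℕ) : Prop :=
  (∃ c, b = [c, c]) ∨ ∃ c d, b = [c, d, c, d]

theorem pass1 {b : List ℕ} (hb : IsBlock b) (P S : List ℕ) (x : ℕ) (hx : x ∉ b) :
    R (P ++ x :: b ++ S) (P ++ b ++ x :: S) := by
  rcases hb with ⟨c, rfl⟩ | ⟨c, d, rfl⟩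
  · have := R.s1 (a := x) (c := c) P [] S (by simp at hx; tauto)
    simpa using this
  · have hc : x ≠ c := by simp at hx; tauto
    have hd : x ≠ d := by simp at hx; tauto
    have h1 := R.s1 P [d] (d :: S) hc
    have h2 := R.s2 (P ++ [c]) [c] S hd
    have h3 := R.s2 P [d] (d :: S) hc
    have h4 := R.s1 (P ++ [c]) [c] S hd
    simp only [List.append_assoc, List.cons_append, List.nil_append] at *
    exact h1.trans (h2.trans (h3.trans h4))

theorem pass {b : List ℕ} (hb : IsBlock b) (P S l : List ℕ) (hx : ∀ x ∈ l, x ∉ b) :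
    R (P ++ l ++ b ++ S) (P ++ b ++ l ++ S) := by
  induction l generalizing P with
  | nil => simpa using ReflTransGen.refl
  | cons x l ih =>
    have h1 := ih (P ++ [x]) (fun y hy => hx y (by simp [hy]))
    have h2 := pass1 hb P (l ++ S) x (hx x (by simp))
    simp only [List.append_assoc, List.cons_append, List.nil_append] at *
    exact h1.trans h2

theorem block_step {b : List ℕ} (hb : IsBlock b) {w w' : List ℕ} (h : Step w w')
    (hx : ∀ x ∈ w, x ∉ b) : R (b ++ w) (b ++ w') := by
  cases h with
  | rot a l =>
    have h1 := R.app_comm (b ++ l) [a]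
    have h2 := pass1 hb [] l a (hx a (by simp))
    simp only [List.append_assoc, List.cons_append, List.nil_append] at *
    exact h1.trans h2
  | slide a c A B h hB => simpa using R.s1 b A B h
  | slide' a c A B h hB => simpa using (R.s1 b A B h).symm

theorem block_R {b : List ℕ} (hb : IsBlock b) {w w' : List ℕ} (h : R w w')
    (hx : ∀ x ∈ w, x ∉ b) : R (b ++ w) (b ++ w') := by
  induction h with
  | refl => exact .refl
  | tail h1 h ih =>
    exact ih.trans (block_step hb h (fun x hm => hx x ((R.perm h1).mem_iff.2 hm)))

def Dup (w : List ℕ) : Prop := ∀ x ∈ w, w.count x = 2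

theorem Dup.perm {w w' : List ℕ} (h : Dup w) (hp : w.Perm w') : Dup w' := by
  intro x hx
  rw [← hp.count_eq]; exact h x (hp.mem_iff.2 hx)

theorem move1 (c a : ℕ) (A B S : List ℕ) (hA : a ∉ A) :
    ∃ X, R (c :: a :: A ++ c :: B ++ a :: S) (c :: a :: c :: X ++ a :: S) := by
  induction A generalizing B with
  | nil => exact ⟨B, by simpa using ReflTransGen.refl⟩
  | cons x A ih =>
    have hx : x ≠ a := by simp at hA; tauto
    obtain ⟨X, hX⟩ := ih (B ++ [x]) (by simp at hA; tauto)
    refine ⟨X, ReflTransGen.trans ?_ hX⟩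
    have := (R.s2 [c] (A ++ c :: B) S hx).symm
    simpa using this

theorem move2 (c a : ℕ) (P X S : List ℕ) (hX : c ∉ X) :
    ∃ Q, R (P ++ c :: a :: c :: X ++ a :: S) (Q ++ c :: a :: c :: a :: S) := by
  induction X generalizing P with
  | nil => exact ⟨P, by simpa using ReflTransGen.refl⟩
  | cons x X ih =>
    have hx : x ≠ c := by simp at hX; tauto
    obtain ⟨Q, hQ⟩ := ih (P ++ [x]) (by simp at hX; tauto)
    refine ⟨Q, ReflTransGen.trans ?_ hQ⟩
    have := (R.s1 P [a] (X ++ a :: S) hx).symm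
    simpa using this

theorem extract (m : ℕ) : ∀ (c : ℕ) (A B : List ℕ), A.length = m → Dup (c :: A ++ c :: B) →
    ∃ b w', IsBlock b ∧ R (c :: A ++ c :: B) (b ++ w') := by
  induction m using Nat.strong_induction_on with
  | _ m ih =>
    intro c A B hm hd
    match A, hm, hd with
    | [], _, _ => exact ⟨[c, c], B, .inl ⟨c, rfl⟩, .refl⟩
    | a :: A, hm, hd =>
      have hac : a ≠ c := by
        rintro rfl
        have := hd a (by simp)
        simp at this
      by_cases ha : a ∈ A
      · obtain ⟨A2, A3, rfl⟩ := List.append_of_mem ha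
        have h1 := R.app_comm [c] (a :: A2 ++ a :: A3 ++ c :: B)
        have hd2 := hd.perm (w' := a :: A2 ++ a :: (A3 ++ c :: B ++ [c]))
          (by have := h1.perm; simpa using this)
        obtain ⟨b, w', hb, hw⟩ := ih A2.length (by simp at hm; omega) a A2 _ rfl hd2
        refine ⟨b, w', hb, ReflTransGen.trans ?_ hw⟩
        simpa using h1
      · have haB : a ∈ B := by
          by_contra hB
          have := hd a (by simp)
          simp [List.count_eq_zero_of_not_mem ha,
            List.count_eq_zero_of_not_mem hB, hac.symm] at this
        obtain ⟨B1, B2, rfl⟩ := List.append_of_mem haB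
        obtain ⟨X, hX⟩ := move1 c a A B1 B2 ha
        have hd2 := hd.perm (w' := c :: a :: c :: X ++ a :: B2)
          (by have := hX.perm; simpa using this)
        have hcX : c ∉ X := by
          intro h
          have := hd2 c (by simp)
          have h2 := List.count_pos_iff.2 h
          simp [List.count_cons] at this
          omega
        obtain ⟨Q, hQ⟩ := move2 c a [] X B2 hcX
        refine ⟨[c, a, c, a], B2 ++ Q, .inr ⟨c, a, rfl⟩, ?_⟩
        have h3 := R.app_comm Q (c :: a :: c :: a :: B2)
        simp only [List.append_assoc, List.cons_append, List.nil_append] at *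
        exact hX.trans (hQ.trans h3)

def K (ks : List ℕ) : List ℕ := ks.flatMap fun c => [c, c]
def G (gs : List (ℕ × ℕ)) : List ℕ := gs.flatMap fun p => [p.1, p.2, p.1, p.2]

theorem normal (m : ℕ) : ∀ w : List ℕ, w.length = m → Dup w →
    ∃ ks gs, R w (K ks ++ G gs) := by
  induction m using Nat.strong_induction_on with
  | _ m ih =>
    intro w hm hd
    match w, hm, hd with
    | [], _, _ => exact ⟨[], [], .refl⟩
    | c :: l, hm, hd =>
      have hc : c ∈ l := by
        by_contra hc
        have := hd c (by simp)
        simp [List.count_eq_zero_of_not_mem hc] at this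
      obtain ⟨A, B, rfl⟩ := List.append_of_mem hc
      obtain ⟨b, w', hb, hw⟩ := extract _ c A B rfl hd
      have hd1 := hd.perm hw.perm
      have hdis : ∀ x ∈ w', x ∉ b := by
        intro x hx hxb
        have h1 := hd1 x (by simp [hx])
        have h2 := List.count_pos_iff.2 hx
        have h3 : 2 ≤ b.count x := by
          rcases hb with ⟨c, rfl⟩ | ⟨c, d, rfl⟩
          · simp at hxb; simp [hxb]
          · have h : x = c ∨ x = d := by simp at hxb; tauto
            rcases h with h | h <;> (subst h; simp [List.count_cons]; try omega)
        rw [List.count_append] at h1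
        omega
      have hd2 : Dup w' := by
        intro x hx
        have h1 := hd1 x (by simp [hx])
        rw [List.count_append, List.count_eq_zero_of_not_mem (hdis x hx)] at h1
        omega
      have hlen : w'.length < m := by
        have h1 := hw.perm.length_eq
        have : 0 < b.length := by rcases hb with ⟨c, rfl⟩ | ⟨c, d, rfl⟩ <;> simp
        rw [← hm, List.length_cons, ← List.length_cons (a := c)]
        simp at h1 ⊢
        omega
      obtain ⟨ks, gs, h⟩ := ih _ hlen w' rfl hd2
      have h1 := block_R hb h hdis
      have h2 : R (b ++ (K ks ++ G gs)) (K ks ++ b ++ G gs) := by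
        have := (pass hb [] (G gs) (K ks) (fun x hx => hdis x (h.perm.mem_iff.2 (by simp [hx])))).symm
        simpa using this
      rcases hb with ⟨c, rfl⟩ | ⟨c, d, rfl⟩
      · exact ⟨c :: ks, gs, hw.trans (by simpa [K] using h1)⟩
      · exact ⟨ks, (c, d) :: gs, hw.trans (h1.trans (by simpa [G] using h2))⟩

theorem K_length (ks) : (K ks).length = 2 * ks.length := by
  induction ks with
  | nil => rfl
  | cons a l ih => simp [K] at *; omega

theorem G_length (gs) : (G gs).length = 4 * gs.length := by
  induction gs with
  | nil => rfl
  | cons a l ih => simp [G] at *; omega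

theorem K_get (ks : List ℕ) (i : ℕ) : (K ks)[2 * i]? = (K ks)[2 * i + 1]? := by
  induction ks generalizing i with
  | nil => rfl
  | cons a l ih =>
    cases i with
    | zero => simp [K]
    | succ i => exact ih i

theorem G_get (gs : List (ℕ × ℕ)) (i : ℕ) : (G gs)[4 * i]? = (G gs)[4 * i + 2]? ∧
    (G gs)[4 * i + 1]? = (G gs)[4 * i + 3]? := by
  induction gs generalizing i with
  | nil => exact ⟨rfl, rfl⟩
  | cons a l ih =>
    cases i with
    | zero => simp [G]
    | succ i => exact ih i

end CD
namespace CD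

/-! ### Diagrams -/

theorem val_succ {N : ℕ} [NeZero N] (i : ZMod N) :
    (i + 1).val = if i.val + 1 = N then 0 else i.val + 1 := by
  have h : i + 1 = ((i.val + 1 : ℕ) : ZMod N) := by simp
  have hl := i.val_lt
  rw [h, ZMod.val_natCast]
  split_ifs with h1
  · rw [h1, Nat.mod_self]
  · exact Nat.mod_eq_of_lt (by omega)

theorem val_cast {N : ℕ} [NeZero N] {a : ℕ} (h : a < N) : ((a : ℕ) : ZMod N).val = a := by
  rw [ZMod.val_natCast, Nat.mod_eq_of_lt h]

def IsD {N : ℕ} (σ : ZMod N → ZMod N) : Prop := Function.Involutive σ ∧ ∀ i, σ i ≠ i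

/-- Position change under a slide of the point `0` along the chord `{1, L + 2}`. -/
def Phi (N L : ℕ) (i : ZMod N) : ZMod N :=
  ((if i.val = 0 then L + 2 else if i.val ≤ L + 2 then i.val - 1 else i.val : ℕ) : ZMod N)

theorem Phi_val {N L : ℕ} [NeZero N] (hL : L + 3 < N) (i : ZMod N) : (Phi N L i).val =
    if i.val = 0 then L + 2 else if i.val ≤ L + 2 then i.val - 1 else i.val := by
  have := i.val_lt
  unfold Phi
  rw [val_cast]
  split_ifs <;> first | omega | contradiction

theorem Phi_inj {N L : ℕ} [NeZero N] (hL : L + 3 < N) : Function.Injective (Phi N L) := by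
  intro i j h
  have h := congrArg ZMod.val h
  rw [Phi_val hL, Phi_val hL] at h
  apply ZMod.val_injective
  split_ifs at h <;> omega

theorem Phi_bij {N L : ℕ} [NeZero N] (hL : L + 3 < N) : Function.Bijective (Phi N L) :=
  Finite.injective_iff_bijective.1 (Phi_inj hL)

theorem slideMove_of {n L : ℕ} [NeZero (2 * n)] (hL : L + 3 < 2 * n)
    {σ σ' : ZMod (2 * n) → ZMod (2 * n)}
    (hσ : IsD σ) (h1 : σ 1 = ((L + 2 : ℕ) : ZMod (2 * n)))
    (hc : ∀ i, σ' (Phi (2 * n) L i) = Phi (2 * n) L (σ i)) : SlideMove n σ σ' := by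
  have : NeZero (2 * n - 1) := ⟨by omega⟩
  obtain ⟨φ, hφ⟩ : ∃ φ : ZMod (2 * n - 1) → ZMod (2 * n), ∀ j, (φ j).val = j.val + 1 :=
    ⟨fun j => ((j.val + 1 : ℕ) : ZMod (2 * n)), fun j => val_cast (by have := j.val_lt; omega)⟩
  obtain ⟨ψ, hψ⟩ : ∃ ψ : ZMod (2 * n) → ZMod (2 * n - 1), ∀ i, (ψ i).val = i.val - 1 :=
    ⟨fun j => ((j.val - 1 : ℕ) : ZMod (2 * n - 1)), fun j => val_cast (by have := j.val_lt; omega)⟩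
  have z0 : (0 : ZMod (2 * n)).val = 0 := ZMod.val_zero
  have z1 : (1 : ZMod (2 * n)).val = 1 := by
    have := val_cast (N := 2 * n) (a := 1) (by omega)
    simpa using this
  have zL : ((L + 2 : ℕ) : ZMod (2 * n)).val = L + 2 := val_cast (by omega)
  have hψφ : ∀ j, ψ (φ j) = j := fun j => ZMod.val_injective _ (by rw [hψ, hφ]; omega)
  have hφψ : ∀ i, i ≠ 0 → φ (ψ i) = i := fun i hi => ZMod.val_injective _ (by
    rw [hφ, hψ]
    have : i.val ≠ 0 := fun h => hi (ZMod.val_injective _ (h.trans z0.symm))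
    omega)
  have hφ0 : ∀ j, φ j ≠ 0 := fun j h => by
    have := congrArg ZMod.val h
    rw [hφ, z0] at this; omega
  have hφinj : Function.Injective φ := Function.LeftInverse.injective hψφ
  set u := ψ (σ 0) with hu
  have hφu : φ u = σ 0 := hφψ _ (hσ.2 0)
  have hφp : φ 0 = 1 := ZMod.val_injective _ (by rw [hφ, z1, ZMod.val_zero])
  obtain ⟨τ, hτu, hτ⟩ : ∃ τ : ZMod (2 * n - 1) → ZMod (2 * n - 1), τ u = u ∧
      ∀ j, j ≠ u → τ j = ψ (σ (φ j)) := by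
    classical
    exact ⟨fun j => if j = u then u else ψ (σ (φ j)), by simp, fun j hj => by simp [hj]⟩
  have hφτ : ∀ j, j ≠ u → φ (τ j) = σ (φ j) := fun j hj => by
    rw [hτ j hj, hφψ]
    intro h
    apply hj
    apply hφinj
    rw [hφu, ← h, hσ.1]
  have hτne : ∀ j, j ≠ u → τ j ≠ u := fun j hj h => by
    have := hφτ j hj
    rw [h, hφu] at this
    exact hφ0 j (hσ.1.injective this.symm)
  have h0u : (0 : ZMod (2 * n - 1)) ≠ u := fun h => by
    have h2 : σ 0 = 1 := by rw [← hφu, ← h, hφp]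
    have h3 : σ 1 = 0 := by rw [← h2, hσ.1]
    have := congrArg ZMod.val (h1.symm.trans h3)
    rw [zL, z0] at this
    omega
  have hφq : φ (τ 0) = ((L + 2 : ℕ) : ZMod (2 * n)) := by rw [hφτ 0 h0u, hφp, h1]
  have two : ∀ i : ZMod (2 * n), i + 2 = i + 1 + 1 := fun i => by ring
  have hx' : Phi (2 * n) L 0 = ((L + 2 : ℕ) : ZMod (2 * n)) :=
    ZMod.val_injective _ (by rw [Phi_val hL, z0, zL]; simp)
  refine ⟨τ, 0, τ 0, u, φ, fun j => Phi (2 * n) L (φ j), 0, Phi (2 * n) L 0,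
    ⟨?_, rfl, ?_, hτu, ?_⟩, ⟨⟨hφ0 0, ?_⟩, ?_, ?_, hφu.symm⟩, ?_, ⟨⟨?_, ?_⟩, ?_, ?_, ?_⟩, ?_⟩
  · intro j
    by_cases hj : j = u
    · rw [hj, hτu, hτu]
    · apply hφinj
      rw [hφτ _ (hτne j hj), hφτ j hj, hσ.1]
  · intro h
    have := congrArg ZMod.val (congrArg φ h)
    rw [hφq, hφp, z1, zL] at this
    omega
  · intro j hj
    by_contra hju
    have := hφτ j hju
    rw [hj] at this
    exact hσ.2 _ this.symm
  · intro j
    have hl := j.val_lt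
    apply ZMod.val_injective
    by_cases h : φ j + 1 = 0
    · rw [if_pos h, two, h, hφ, val_succ, val_succ, z0]
      have h := congrArg ZMod.val h
      rw [val_succ, hφ, z0] at h
      split_ifs at * <;> omega
    · rw [if_neg h, hφ, val_succ, val_succ, hφ]
      have h : (φ j + 1).val ≠ 0 := fun h' => h (ZMod.val_injective _ (h'.trans z0.symm))
      rw [val_succ, hφ] at h
      split_ifs at * <;> omega
  · intro j hj
    exact (hφτ j hj).symm
  · rw [hφu, hσ.1]
  · rw [hφp, zero_add]
  · intro h
    exact hφ0 _ (Phi_inj hL h)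
  · intro j
    have hl := j.val_lt
    apply ZMod.val_injective
    dsimp only
    by_cases h : Phi (2 * n) L (φ j) + 1 = Phi (2 * n) L 0
    · rw [if_pos h, two, val_succ, h, Phi_val hL, Phi_val hL, hφ, val_succ, z0]
      have h := congrArg ZMod.val h
      rw [val_succ, Phi_val hL, hφ, Phi_val hL, z0] at h
      split_ifs at * <;> omega
    · rw [if_neg h, Phi_val hL, hφ, val_succ, val_succ, Phi_val hL, hφ]
      have h : (Phi (2 * n) L (φ j) + 1).val ≠ (Phi (2 * n) L 0).val :=
        fun h' => h (ZMod.val_injective _ h')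
      rw [val_succ, Phi_val hL, hφ, Phi_val hL, z0] at h
      split_ifs at * <;> omega
  · intro j hj
    beta_reduce
    rw [hc, hφτ j hj]
  · beta_reduce
    rw [hc, hφu, hσ.1]
  · beta_reduce
    rw [hc, hφu]
  · beta_reduce
    rw [hφq]
    apply ZMod.val_injective
    rw [val_succ, Phi_val hL, Phi_val hL, zL, z0]
    split_ifs <;> first | omega | contradiction

/-! ### Cycle counts -/

theorem cycles_eq_of {α β : Type*} {f : α → α} {f' : β → β} (F : α → β) (H : β → α)
    (hF : ∀ i, Quot.mk (fun i j => f' i = j) (F (f i)) = Quot.mk _ (F i))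
    (hH : ∀ i, Quot.mk (fun i j => f i = j) (H (f' i)) = Quot.mk _ (H i))
    (hHF : ∀ i, Quot.mk (fun i j => f i = j) (H (F i)) = Quot.mk _ i)
    (hFH : ∀ i, Quot.mk (fun i j => f' i = j) (F (H i)) = Quot.mk _ i) :
    cycles f = cycles f' := by
  unfold cycles
  refine Nat.card_congr ⟨Quot.lift (fun i => Quot.mk _ (F i)) ?_,
    Quot.lift (fun i => Quot.mk _ (H i)) ?_, ?_, ?_⟩
  · rintro a b rfl; exact (hF a).symm
  · rintro a b rfl; exact (hH a).symm
  · rintro ⟨i⟩; exact hHF i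
  · rintro ⟨i⟩; exact hFH i

theorem qstep {α : Type*} (f : α → α) (i : α) :
    Quot.mk (fun i j => f i = j) (f i) = Quot.mk _ i :=
  (Quot.sound (r := fun i j => f i = j) rfl).symm

theorem cycles_conj {α : Type*} {f f' : α → α} (F : α → α) (hF : Function.Bijective F)
    (h : ∀ i, f' (F i) = F (f i)) : cycles f = cycles f' := by
  obtain ⟨H, h1, h2⟩ := Function.bijective_iff_has_inverse.1 hF
  refine cycles_eq_of F H ?_ ?_ ?_ ?_
  · intro i; rw [← h, qstep]
  · intro i
    have : H (f' i) = f (H i) := by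
      rw [← h1 (f (H i)), ← h, h2]
    rw [this, qstep]
  · intro i; rw [h1]
  · intro i; rw [h2]

theorem cycles_slide {α : Type*} [DecidableEq α] (r ρ σ : α → α) (hr : Function.Injective r)
    (hσ : Function.Involutive σ) (x : α)
    (hpx : r x ≠ x) (hu : σ x ≠ r x) (hqw : r (σ (r x)) ≠ x)
    (w : α) (hw : r w = x)
    (hρ1 : ρ (σ (r x)) = x) (hρ2 : ρ x = r (σ (r x))) (hρ3 : ρ w = r x)
    (hρ : ∀ i, i ≠ σ (r x) → i ≠ x → i ≠ w → ρ i = r i) :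
    cycles (r ∘ σ) = cycles (ρ ∘ σ) := by
  set p := r x with hp
  have inj := hσ.injective
  have hxp : x ≠ p := fun h => hpx h.symm
  have hwx : w ≠ x := by rintro rfl; exact hpx hw
  have hwq : w ≠ σ p := by rintro rfl; exact hqw hw
  have hσw : σ w ≠ p := fun h => hwq (by rw [← h, hσ])
  have hσwu : σ w ≠ σ x := fun h => hwx (inj h)
  have hrqp : r (σ p) ≠ p := fun h => hu (by
    have := hr h
    rw [← this, hσ])
  have ep : (r ∘ σ) (σ x) = p := by simp [hσ x, hp]
  have ex : (r ∘ σ) (σ w) = x := by simp [hσ w, hw]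
  have ep' : (ρ ∘ σ) p = x := hρ1
  have eu' : (ρ ∘ σ) (σ x) = r (σ p) := by simp [hσ x, hρ2]
  have ew' : (ρ ∘ σ) (σ w) = p := by simp [hσ w, hρ3]
  have eo : ∀ i, i ≠ p → i ≠ σ x → i ≠ σ w → (ρ ∘ σ) i = (r ∘ σ) i ∧ (r ∘ σ) i ≠ p := by
    intro i h1 h2 h3
    refine ⟨hρ _ (fun h => h1 (inj h)) (fun h => h2 (by rw [← h, hσ]))
      (fun h => h3 (by rw [← h, hσ])), ?_⟩
    intro h
    have : σ i = x := hr h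
    exact h2 (by rw [← this, hσ])
  refine cycles_eq_of (fun i => if i = p then σ x else i) (fun i => if i = p then x else i)
    ?_ ?_ ?_ ?_
  · intro i
    by_cases h1 : i = p
    · subst h1
      rw [if_pos rfl]
      have : (r ∘ σ) p = (ρ ∘ σ) (σ x) := eu'.symm
      rw [if_neg (by simpa using hrqp), this, qstep]
    by_cases h2 : i = σ x
    · subst h2
      rw [ep, if_pos rfl, if_neg hu]
    by_cases h3 : i = σ w
    · subst h3
      rw [ex, if_neg hxp, if_neg hσw, ← qstep (ρ ∘ σ) (σ w), ew', ← qstep (ρ ∘ σ) p, ep']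
    · obtain ⟨e1, e2⟩ := eo i h1 h2 h3
      rw [if_neg e2, if_neg h1, ← e1, qstep]
  · intro i
    by_cases h1 : i = p
    · subst h1
      rw [ep', if_pos rfl, if_neg hxp]
    by_cases h2 : i = σ x
    · subst h2
      rw [eu', if_neg hrqp, if_neg hu, ← qstep (r ∘ σ) (σ x), ep]
      exact qstep (r ∘ σ) p
    by_cases h3 : i = σ w
    · subst h3
      rw [ew', if_pos rfl, if_neg hσw, ← qstep (r ∘ σ) (σ w), ex]
    · obtain ⟨e1, e2⟩ := eo i h1 h2 h3
      rw [e1, if_neg e2, if_neg h1, qstep]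
  · intro i
    by_cases h1 : i = p
    · subst h1
      rw [if_pos rfl, if_neg hu, ← qstep (r ∘ σ) (σ x), ep]
    · rw [if_neg h1, if_neg h1]
  · intro i
    by_cases h1 : i = p
    · subst h1
      rw [if_pos rfl, if_neg hxp, ← qstep (ρ ∘ σ) p, ep']
    · rw [if_neg h1, if_neg h1]

theorem cycles_slide_eq {n L : ℕ} [NeZero (2 * n)] (hL : L + 3 < 2 * n)
    {σ σ' : ZMod (2 * n) → ZMod (2 * n)}
    (hσ : IsD σ) (h1 : σ 1 = ((L + 2 : ℕ) : ZMod (2 * n)))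
    (hc : ∀ i, σ' (Phi (2 * n) L i) = Phi (2 * n) L (σ i)) :
    cycles (rot n ∘ σ) = cycles (rot n ∘ σ') := by
  classical
  have z0 : (0 : ZMod (2 * n)).val = 0 := ZMod.val_zero
  have z1 : (1 : ZMod (2 * n)).val = 1 := by
    have := val_cast (N := 2 * n) (a := 1) (by omega)
    simpa using this
  have zL : ((L + 2 : ℕ) : ZMod (2 * n)).val = L + 2 := val_cast (by omega)
  have r0 : rot n 0 = 1 := by simp [rot]
  have zm : (-1 : ZMod (2 * n)).val = 2 * n - 1 := by
    have h := val_succ (-1 : ZMod (2 * n))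
    have hl := (-1 : ZMod (2 * n)).val_lt
    rw [neg_add_cancel, z0] at h
    split_ifs at h; omega
  have ne : ∀ {i j : ZMod (2 * n)}, i.val ≠ j.val → i ≠ j := fun h e => h (congrArg _ e)
  have ne' : ∀ {i j : ZMod (2 * n)}, i ≠ j → i.val ≠ j.val := fun h e => h (ZMod.val_injective _ e)
  have hPs := (Phi_bij hL).2
  choose H hH using hPs
  have hHP : ∀ i, H (Phi _ L i) = i := fun i => Phi_inj hL (hH _)
  let ρ : ZMod (2 * n) → ZMod (2 * n) := fun i => H (Phi _ L i + 1)
  have hρe : ∀ i j : ZMod (2 * n), Phi _ L j = Phi _ L i + 1 → ρ i = j := fun i j h => by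
    change H _ = j
    rw [← h, hHP]
  have e1 : cycles (rot n ∘ σ) = cycles (ρ ∘ σ) := by
    refine cycles_slide (rot n) ρ σ ?_ hσ.1 0 ?_ ?_ ?_ (-1) ?_ ?_ ?_ ?_ ?_
    · intro a b h; exact add_right_cancel h
    · rw [r0]; exact ne (by rw [z0, z1]; omega)
    · rw [r0]; intro h
      rw [← h, hσ.1] at h1
      have := congrArg ZMod.val h1
      rw [z0, zL] at this; omega
    · rw [r0, h1]
      refine ne ?_
      rw [rot, val_succ, zL, z0]; split_ifs <;> first | omega | contradiction
    · simp [rot]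
    · rw [r0, h1]
      refine hρe _ _ (ZMod.val_injective _ ?_)
      rw [val_succ, Phi_val hL, Phi_val hL, zL, z0]
      split_ifs <;> first | omega | contradiction
    · rw [r0, h1]
      refine hρe _ _ (ZMod.val_injective _ ?_)
      rw [val_succ, Phi_val hL, Phi_val hL, rot, val_succ, zL, z0]
      split_ifs <;> first | omega | contradiction
    · rw [r0]
      refine hρe _ _ (ZMod.val_injective _ ?_)
      rw [val_succ, Phi_val hL, Phi_val hL, z1, zm]
      split_ifs <;> first | omega | contradiction
    · intro i a b c
      rw [r0, h1] at a
      have a := ne' a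
      have b := ne' b
      have c := ne' c
      rw [zL] at a
      rw [z0] at b
      rw [zm] at c
      have := i.val_lt
      refine hρe _ _ (ZMod.val_injective _ ?_)
      rw [val_succ, Phi_val hL, Phi_val hL, rot, val_succ]
      split_ifs <;> first | omega | contradiction
  rw [e1]
  refine cycles_conj _ (Phi_bij hL) ?_
  intro i
  change σ' (Phi _ L i) + 1 = Phi _ L (H (Phi _ L (σ i) + 1))
  rw [hH, hc]

/-! ### Words representing diagrams -/

def Rep (n : ℕ) (w : List ℕ) (σ : ZMod (2 * n) → ZMod (2 * n)) : Prop :=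
  w.length = 2 * n ∧ ∀ i j : ZMod (2 * n), w[i.val]? = w[j.val]? ↔ (j = i ∨ j = σ i)

theorem Rep.transfer {n : ℕ} {w w' : List ℕ} {σ : ZMod (2 * n) → ZMod (2 * n)}
    (h : Rep n w σ) (hσ : IsD σ) (hl : w'.length = w.length)
    {F H : ZMod (2 * n) → ZMod (2 * n)} (h1 : ∀ i, H (F i) = i) (h2 : ∀ i, F (H i) = i)
    (hw : ∀ i : ZMod (2 * n), w'[(F i).val]? = w[i.val]?) :
    IsD (fun i => F (σ (H i))) ∧ Rep n w' (fun i => F (σ (H i))) := by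
  refine ⟨⟨fun i => by simp [h1, h2, hσ.1 _], fun i hi => ?_⟩, by rw [hl, h.1], fun i j => ?_⟩
  · apply hσ.2 (H i)
    rw [← h1 (σ (H i))]
    exact congrArg H hi
  · rw [← h2 i, ← h2 j, hw, hw, h.2]
    simp only [h1]
    constructor
    · rintro (h | h) <;> simp [h]
    · rintro (h | h)
      · left; rw [← h1 (H j), h, h1]
      · right; rw [← h1 (H j), h, h1]

/-- Elementary moves. -/
def Mv (n : ℕ) (a b : ZMod (2 * n) → ZMod (2 * n)) : Prop :=
  SlideMove n a b ∨ SlideMove n b a ∨ RotMove n a b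

theorem slide_get {n : ℕ} [NeZero (2 * n)] (a c : ℕ) (A B : List ℕ)
    (hlen : A.length + B.length + 3 = 2 * n) (hL : A.length + 3 < 2 * n) (i : ZMod (2 * n)) :
    (c :: A ++ c :: a :: B)[(Phi (2 * n) A.length i).val]? =
      (a :: c :: A ++ c :: B)[i.val]? := by
  rw [Phi_val hL]
  generalize i.val = m
  rcases m with _ | m
  · simp
  · rw [if_neg (by omega)]
    have e : c :: A ++ c :: a :: B = (c :: A ++ [c]) ++ a :: B := by simp
    have e' : c :: A ++ c :: B = (c :: A ++ [c]) ++ B := by simp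
    rw [List.cons_append, List.cons_append, List.getElem?_cons_succ, ← List.cons_append, e, e']
    split_ifs with h
    · rw [List.getElem?_append_left (l₂ := a :: B) (by simp; omega),
        List.getElem?_append_left (l₂ := B) (by simp; omega)]
      simp
    · rw [List.getElem?_append_right (l₂ := a :: B) (by simp; omega),
        List.getElem?_append_right (l₂ := B) (by simp; omega)]
      have : m + 1 - (c :: A ++ [c]).length = (m - (c :: A ++ [c]).length) + 1 := by
        simp; omega
      rw [this, List.getElem?_cons_succ]

theorem step_lift {n : ℕ} [NeZero (2 * n)] {w w' : List ℕ} (h : Step w w')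
    {σ : ZMod (2 * n) → ZMod (2 * n)} (hσ : IsD σ) (hr : Rep n w σ) :
    ∃ σ', IsD σ' ∧ Rep n w' σ' ∧ Mv n σ σ' ∧ cycles (rot n ∘ σ) = cycles (rot n ∘ σ') := by
  have key : ∀ (a c : ℕ) (A B : List ℕ) (σ : ZMod (2 * n) → ZMod (2 * n)),
      A.length + 3 < 2 * n → Rep n (a :: c :: A ++ c :: B) σ → 
      σ 1 = ((A.length + 2 : ℕ) : ZMod (2 * n)) := by
    intro a c A B σ hL hr
    have z1 : (1 : ZMod (2 * n)).val = 1 := by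
      have := val_cast (N := 2 * n) (a := 1) (by omega)
      simpa using this
    have zL : ((A.length + 2 : ℕ) : ZMod (2 * n)).val = A.length + 2 := val_cast (by omega)
    have := (hr.2 1 ((A.length + 2 : ℕ) : ZMod (2 * n))).1 (by
      rw [z1, zL]
      simp)
    rcases this with h | h
    · have := congrArg ZMod.val h
      rw [z1, zL] at this; omega
    · exact h.symm
  cases h with
  | rot a l =>
    obtain ⟨h1, h2⟩ := hr.transfer (w' := a :: l) hσ (by simp) (F := fun i => i + 1)
      (H := fun i => i - 1) (by simp) (by simp) (by
        intro i
        have hl := hr.1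
        have := i.val_lt
        simp at hl
        rw [val_succ]
        split_ifs with h
        · rw [List.getElem?_append_right (by omega)]
          have : i.val - l.length = 0 := by omega
          simp [this]
        · rw [List.getElem?_append_left (by omega)]
          simp)
    refine ⟨_, h1, h2, .inr (.inr fun i => rfl), ?_⟩
    refine cycles_conj (fun i => i + 1) ⟨fun a b h => add_right_cancel h,
      fun b => ⟨b - 1, by simp⟩⟩ ?_
    intro i
    simp [rot]
  | slide a c A B h hB =>
    have hl := hr.1
    have := List.length_pos_iff.2 hB
    simp at hl
    have hL : A.length + 3 < 2 * n := by omega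
    obtain ⟨H, h1, h2⟩ := Function.bijective_iff_has_inverse.1 (Phi_bij hL)
    obtain ⟨h3, h4⟩ := hr.transfer (w' := c :: A ++ c :: a :: B) hσ (by simp; omega) h1 h2
      (slide_get a c A B (by omega) hL)
    have hc : ∀ i, (fun i => Phi _ A.length (σ (H i))) (Phi (2 * n) A.length i) =
      Phi (2 * n) A.length (σ i) := fun i => by simp [h1 i]
    have hs := key a c A B σ hL hr
    exact ⟨_, h3, h4, .inl (slideMove_of hL hσ hs hc), cycles_slide_eq hL hσ hs hc⟩
  | slide' a c A B h hB =>
    have hl := hr.1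
    have := List.length_pos_iff.2 hB
    simp at hl
    have hL : A.length + 3 < 2 * n := by omega
    obtain ⟨H, h1, h2⟩ := Function.bijective_iff_has_inverse.1 (Phi_bij hL)
    obtain ⟨h3, h4⟩ := hr.transfer (w' := a :: c :: A ++ c :: B) hσ (by simp; omega) h2 h1
      (fun i => by rw [← slide_get a c A B (by omega) hL, h2])
    have hc : ∀ i, σ (Phi (2 * n) A.length i) =
      Phi (2 * n) A.length ((fun i => H (σ (Phi (2 * n) A.length i))) i) := fun i => by
        simp [h2 _]
    have hs := key a c A B _ hL h4
    exact ⟨_, h3, h4, .inr (.inl (slideMove_of hL h3 hs hc)), (cycles_slide_eq hL h3 hs hc).symm⟩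

theorem R_lift {n : ℕ} [NeZero (2 * n)] {w w' : List ℕ} (h : R w w')
    {σ : ZMod (2 * n) → ZMod (2 * n)} (hσ : IsD σ) (hr : Rep n w σ) :
    ∃ σ', IsD σ' ∧ Rep n w' σ' ∧ ReflTransGen (Mv n) σ σ' ∧
      cycles (rot n ∘ σ) = cycles (rot n ∘ σ') := by
  induction h with
  | refl => exact ⟨σ, hσ, hr, .refl, rfl⟩
  | tail _ h ih =>
    obtain ⟨σ₁, a, b, c, d⟩ := ih
    obtain ⟨σ₂, a', b', c', d'⟩ := step_lift h a b
    exact ⟨σ₂, a', b', c.tail c', d.trans d'⟩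

theorem exists_word {n : ℕ} [NeZero (2 * n)] {σ : ZMod (2 * n) → ZMod (2 * n)} (hσ : IsD σ) :
    ∃ w, Rep n w σ ∧ Dup w := by
  let f : ℕ → ℕ := fun i => min i (σ (i : ZMod (2 * n))).val
  have hf : ∀ i j : ZMod (2 * n), f i.val = f j.val ↔ (j = i ∨ j = σ i) := by
    intro i j
    simp only [f, ZMod.natCast_val, ZMod.cast_id', id]
    constructor
    · intro h
      rcases min_choice i.val (σ i).val with h1 | h1 <;>
      rcases min_choice j.val (σ j).val with h2 | h2 <;>
      rw [h1, h2] at h <;> have h := ZMod.val_injective _ h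
      · exact .inl h.symm
      · right; rw [h, hσ.1]
      · right; exact h.symm
      · left; exact hσ.1.injective h.symm
    · rintro (h | h)
      · rw [h]
      · rw [h, hσ.1, min_comm]
  refine ⟨(List.range (2 * n)).map f, ⟨by simp, ?_⟩, ?_⟩
  · intro i j
    rw [← hf i j]
    simp [i.val_lt, j.val_lt]
  · intro x hx
    obtain ⟨m, hm, rfl⟩ := List.mem_map.1 hx
    have hm : m < 2 * n := by simpa using hm
    have e : ((List.range (2 * n)).map f).count (f m) =
        ((Finset.range (2 * n)).filter (fun j => f m = f j)).card := by
      have := Multiset.count_map f (Multiset.range (2 * n)) (f m)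
      rw [Multiset.range, Multiset.map_coe, Multiset.coe_count] at this
      exact this
    rw [e]
    have : (Finset.range (2 * n)).filter (fun j => f m = f j) =
        {m, (σ (m : ZMod (2 * n))).val} := by
      ext j
      simp only [Finset.mem_filter, Finset.mem_range, Finset.mem_insert, Finset.mem_singleton]
      constructor
      · rintro ⟨h1, h2⟩
        have := (hf (m : ZMod (2 * n)) (j : ZMod (2 * n))).1 (by rwa [val_cast hm, val_cast h1])
        rcases this with h | h
        · left
          have := congrArg ZMod.val h
          rwa [val_cast hm, val_cast h1] at this
        · right
          rw [← h, val_cast h1]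
      · rintro (h | h)
        · subst h; exact ⟨hm, rfl⟩
        · subst h
          refine ⟨ZMod.val_lt _, ?_⟩
          have := (hf (m : ZMod (2 * n)) _).2 (.inr rfl)
          rwa [val_cast hm] at this
    rw [this, Finset.card_pair]
    intro h
    apply hσ.2 (m : ZMod (2 * n))
    apply ZMod.val_injective
    rw [← h, val_cast hm]

end CD
namespace CD

theorem caravan_val {n k g : ℕ} [NeZero (2 * n)] (hn : k + 2 * g = n) (a : ZMod (2 * n)) :
    (caravan n k g a).val =
      if a.val < 2 * k then (if a.val % 2 = 0 then a.val + 1 else a.val - 1)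
      else if (a.val - 2 * k) % 4 < 2 then a.val + 2 else a.val - 2 := by
  have hl := a.val_lt
  have ha : ((a.val : ℕ) : ZMod (2 * n)) = a := by simp
  have hc : caravan n k g a = ((if a.val < 2 * k then
      (if a.val % 2 = 0 then a.val + 1 else a.val - 1)
      else if (a.val - 2 * k) % 4 < 2 then a.val + 2 else a.val - 2 : ℕ) : ZMod (2 * n)) := by
    unfold caravan
    split_ifs with h1 h2 h3
    · rw [Nat.cast_add, ha]; simp
    · rw [Nat.cast_sub (by omega), ha]; simp
    · rw [Nat.cast_add, ha]; simp
    · rw [Nat.cast_sub (by omega), ha]; simp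
  rw [hc, val_cast]
  split_ifs <;> omega

theorem rep_caravan {n : ℕ} [NeZero (2 * n)] {ks : List ℕ} {gs : List (ℕ × ℕ)}
    {σ : ZMod (2 * n) → ZMod (2 * n)} (hr : Rep n (K ks ++ G gs) σ) :
    ks.length + 2 * gs.length = n ∧ σ = caravan n ks.length gs.length := by
  have hn : ks.length + 2 * gs.length = n := by
    have := hr.1
    rw [List.length_append, K_length, G_length] at this
    omega
  refine ⟨hn, ?_⟩
  funext i
  have hv := caravan_val hn i
  have hl := i.val_lt
  have hg : (K ks ++ G gs)[i.val]? = (K ks ++ G gs)[(caravan n ks.length gs.length i).val]? := by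
    rw [hv]
    split_ifs with h1 h2 h3
    · rw [List.getElem?_append_left (by rw [K_length]; omega),
        List.getElem?_append_left (by rw [K_length]; omega)]
      have := K_get ks (i.val / 2)
      rwa [show 2 * (i.val / 2) = i.val by omega] at this
    · rw [List.getElem?_append_left (by rw [K_length]; omega),
        List.getElem?_append_left (by rw [K_length]; omega)]
      have := K_get ks (i.val / 2)
      rw [show 2 * (i.val / 2) = i.val - 1 by omega, show i.val - 1 + 1 = i.val by omega] at this
      exact this.symm
    · rw [List.getElem?_append_right (by rw [K_length]; omega),
        List.getElem?_append_right (by rw [K_length]; omega), K_length]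
      have := G_get gs ((i.val - 2 * ks.length) / 4)
      generalize hm : i.val - 2 * ks.length = m at *
      have e : i.val + 2 - 2 * ks.length = m + 2 := by omega
      rw [e]
      have h4 : m % 4 = 0 ∨ m % 4 = 1 := by omega
      rcases h4 with h4 | h4
      · rw [show 4 * (m / 4) = m by omega] at this
        exact this.1
      · rw [show 4 * (m / 4) + 1 = m by omega, show 4 * (m / 4) + 3 = m + 2 by omega] at this
        exact this.2
    · rw [List.getElem?_append_right (by rw [K_length]; omega),
        List.getElem?_append_right (by rw [K_length]; omega), K_length]
      have := G_get gs ((i.val - 2 * ks.length) / 4)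
      have e : i.val - 2 - 2 * ks.length = i.val - 2 * ks.length - 2 := by omega
      rw [e]
      generalize hm : i.val - 2 * ks.length = m at *
      have h4 : m % 4 = 2 ∨ m % 4 = 3 := by omega
      rcases h4 with h4 | h4
      · rw [show 4 * (m / 4) + 2 = m by omega, show 4 * (m / 4) = m - 2 by omega] at this
        exact this.1.symm
      · rw [show 4 * (m / 4) + 3 = m by omega, show 4 * (m / 4) + 1 = m - 2 by omega] at this
        exact this.2.symm
  rcases (hr.2 _ _).1 hg with h | h
  · exfalso
    have := congrArg ZMod.val h
    rw [hv] at this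
    split_ifs at this <;> omega
  · exact h.symm

theorem cycles_caravan {n k g : ℕ} [NeZero (2 * n)] (hn : k + 2 * g = n) :
    cycles (rot n ∘ caravan n k g) = k + 1 := by
  have hn0 : 2 * n ≠ 0 := NeZero.ne _
  set f := rot n ∘ caravan n k g with hf
  have fv : ∀ a : ZMod (2 * n), (f a).val = if (caravan n k g a).val + 1 = 2 * n then 0 else
      (caravan n k g a).val + 1 := fun a => val_succ _
  let F : ZMod (2 * n) → Option (Fin k) := fun a =>
    if h : a.val < 2 * k ∧ a.val % 2 = 1 then some ⟨a.val / 2, by omega⟩ else none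
  let H : Option (Fin k) → ZMod (2 * n) := fun o => match o with
    | none => 0
    | some i => ((2 * i.val + 1 : ℕ) : ZMod (2 * n))
  -- one step, on natural-number representatives
  have st : ∀ a b : ℕ, a < 2 * n → (b < 2 * n ∨ b = 2 * n) →
      (if a < 2 * k then (if a % 2 = 0 then a + 1 else a - 1)
      else if (a - 2 * k) % 4 < 2 then a + 2 else a - 2) + 1 = b →
      Quot.mk (fun i j => f i = j) ((b : ℕ) : ZMod (2 * n)) =
      Quot.mk (fun i j => f i = j) ((a : ℕ) : ZMod (2 * n)) := by
    intro a b ha hb h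
    have : ((b : ℕ) : ZMod (2 * n)) = f a := by
      apply ZMod.val_injective
      rw [fv, caravan_val hn, val_cast ha, h]
      rcases hb with hb | hb
      · rw [val_cast hb, if_neg (by omega)]
      · rw [if_pos hb, hb]; simp
    rw [this, qstep]
  have evens : ∀ i, i ≤ k → Quot.mk (fun i j => f i = j) ((2 * i : ℕ) : ZMod (2 * n)) =
      Quot.mk (fun i j => f i = j) ((0 : ℕ) : ZMod (2 * n)) := by
    intro i
    induction i with
    | zero => intro _; rfl
    | succ i ih =>
      intro hi
      rw [← ih (by omega)]
      apply st <;> first | omega | (split_ifs <;> omega)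
  have handles : ∀ j, j ≤ g → Quot.mk (fun i j => f i = j) ((2 * k + 4 * j : ℕ) : ZMod (2 * n)) =
      Quot.mk (fun i j => f i = j) ((0 : ℕ) : ZMod (2 * n)) ∧
      (j < g → ∀ s, s < 4 →
        Quot.mk (fun i j => f i = j) ((2 * k + 4 * j + s : ℕ) : ZMod (2 * n)) =
        Quot.mk (fun i j => f i = j) ((0 : ℕ) : ZMod (2 * n))) := by
    intro j hj
    have main : ∀ j, j < g →
        Quot.mk (fun i j => f i = j) ((2 * k + 4 * j : ℕ) : ZMod (2 * n)) =
        Quot.mk (fun i j => f i = j) ((0 : ℕ) : ZMod (2 * n)) →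
        (∀ s, s ≤ 4 →
        Quot.mk (fun i j => f i = j) ((2 * k + 4 * j + s : ℕ) : ZMod (2 * n)) =
        Quot.mk (fun i j => f i = j) ((0 : ℕ) : ZMod (2 * n))) := by
      intro j hj h0
      have h3 := st (2 * k + 4 * j) (2 * k + 4 * j + 3) (by omega) (by omega)
        (by split_ifs <;> omega)
      have h2 := st (2 * k + 4 * j + 3) (2 * k + 4 * j + 2) (by omega) (by omega)
        (by split_ifs <;> omega)
      have h1 := st (2 * k + 4 * j + 2) (2 * k + 4 * j + 1) (by omega) (by omega)
        (by split_ifs <;> omega)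
      have h4 := st (2 * k + 4 * j + 1) (2 * k + 4 * j + 4) (by omega) (by omega)
        (by split_ifs <;> omega)
      intro s hs
      interval_cases s
      · exact h0
      · exact h1.trans (h2.trans (h3.trans h0))
      · exact h2.trans (h3.trans h0)
      · exact h3.trans h0
      · exact h4.trans (h1.trans (h2.trans (h3.trans h0)))
    have base : ∀ j, j ≤ g →
        Quot.mk (fun i j => f i = j) ((2 * k + 4 * j : ℕ) : ZMod (2 * n)) =
        Quot.mk (fun i j => f i = j) ((0 : ℕ) : ZMod (2 * n)) := by
      intro j
      induction j with
      | zero => intro _; exact evens k le_rfl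
      | succ j ih => intro hj; exact main j (by omega) (ih (by omega)) 4 le_rfl
    exact ⟨base j hj, fun h s hs => main j h (base j hj) s (by omega)⟩
  have none_case : ∀ a : ZMod (2 * n), ¬ (a.val < 2 * k ∧ a.val % 2 = 1) →
      Quot.mk (fun i j => f i = j) a = Quot.mk (fun i j => f i = j) ((0 : ℕ) : ZMod (2 * n)) := by
    intro a ha
    have hl := a.val_lt
    have e : a = ((a.val : ℕ) : ZMod (2 * n)) := by simp
    rw [e]
    generalize a.val = m at *
    by_cases hk : m < 2 * k
    · have := evens (m / 2) (by omega)
      rwa [show 2 * (m / 2) = m by omega] at this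
    · have := (handles ((m - 2 * k) / 4) (by omega)).2 (by omega) ((m - 2 * k) % 4) (by omega)
      rwa [show 2 * k + 4 * ((m - 2 * k) / 4) + (m - 2 * k) % 4 = m by omega] at this
  have hFf : ∀ a, F (f a) = F a := by
    intro a
    have hl := a.val_lt
    have hv := fv a
    rw [caravan_val hn] at hv
    by_cases h : a.val < 2 * k ∧ a.val % 2 = 1
    · have : f a = a := by
        apply ZMod.val_injective
        rw [hv]
        split_ifs <;> omega
      rw [this]
    · have h' : ¬ ((f a).val < 2 * k ∧ (f a).val % 2 = 1) := by
        split_ifs at hv <;> omega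
      simp only [F, dif_neg h, dif_neg h']
  have hFH : ∀ o, F (H o) = o := by
    rintro (_ | i)
    · have h : ¬ ((0 : ZMod (2 * n)).val < 2 * k ∧ (0 : ZMod (2 * n)).val % 2 = 1) := by
        rw [ZMod.val_zero]; omega
      simp only [F, H, dif_neg h]
    · have hi := i.isLt
      have hv : ((2 * i.val + 1 : ℕ) : ZMod (2 * n)).val = 2 * i.val + 1 := val_cast (by omega)
      simp only [F, H]
      rw [dif_pos ⟨by omega, by omega⟩]
      congr 1
      apply Fin.ext
      simp only [hv]
      omega
  have hHF : ∀ a, Quot.mk (fun i j => f i = j) (H (F a)) = Quot.mk _ a := by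
    intro a
    by_cases h : a.val < 2 * k ∧ a.val % 2 = 1
    · simp only [F, H, dif_pos h]
      rw [show 2 * (a.val / 2) + 1 = a.val by omega]
      simp
    · simp only [F, H, dif_neg h]
      rw [none_case a h]
      simp
  unfold cycles
  rw [Nat.card_congr (β := Option (Fin k)) ⟨Quot.lift F (by rintro a b rfl; exact (hFf a).symm),
    fun o => Quot.mk _ (H o), by rintro ⟨a⟩; exact hHF a, fun o => hFH o⟩]
  simp

end CD

/-- Classification of surfaces via caravans: every chord diagram `σ` of order `n` can be
transformed by a finite sequence of slide moves and rotations into the caravan `C_{k,g}`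
with `g = g(σ)` and `k = c(r ∘ σ) - 1`; in particular `k + 2g = n`. -/
theorem chord_diagram_classification (n : ℕ) (hn : 0 < n)
    (σ : ZMod (2 * n) → ZMod (2 * n))
    (hinv : Function.Involutive σ) (hfpf : ∀ i, σ i ≠ i) :
    Relation.ReflTransGen
      (fun a b => SlideMove n a b ∨ SlideMove n b a ∨ RotMove n a b)
      σ (caravan n (cycles (rot n ∘ σ) - 1) (genus n σ)) ∧
    (cycles (rot n ∘ σ) - 1) + 2 * genus n σ = n := by
  have : NeZero (2 * n) := ⟨by omega⟩
  have hσ : CD.IsD σ := ⟨hinv, hfpf⟩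
  obtain ⟨w, hw, hd⟩ := CD.exists_word hσ
  obtain ⟨ks, gs, hR⟩ := CD.normal _ w rfl hd
  obtain ⟨σ', _, h2, h3, h4⟩ := CD.R_lift hR hσ hw
  obtain ⟨h5, rfl⟩ := CD.rep_caravan h2
  have h6 : cycles (rot n ∘ σ) = ks.length + 1 := h4.trans (CD.cycles_caravan h5)
  have h7 : genus n σ = gs.length := by
    unfold genus
    rw [h6]; omega
  rw [h7, h6, Nat.add_sub_cancel]
  exact ⟨h3, h5⟩
end

section
/- For all k, g ≥ 0 with k + 2g = n, the caravan chord diagram C_{k,g} satisfies c(r ∘ C_{k,g}) = k + 1 and g(C_{k,g}) = g; that is, the one-vertex ribbon graph of the caravan consisting of k 'one-humped camels' and g 'two-humped camels' is a surface of genus g with k + 1 boundary components. -/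
/-- The face permutation of the caravan in natural coordinates. -/
def faceStep (k m : ℕ) : ℕ :=
  if m < 2 * k then (if m % 2 = 0 then m + 2 else m)
  else if (m - 2 * k) % 4 < 2 then m + 3 else m - 1

theorem step_cast (n k g m : ℕ) (hm : m < 2 * n) :
    (rot n ∘ caravan n k g) (m : ZMod (2 * n)) = ((faceStep k m : ℕ) : ZMod (2 * n)) := by
  have hv : (m : ZMod (2 * n)).val = m := ZMod.val_cast_of_lt hm
  simp only [Function.comp, rot, caravan, faceStep, hv]
  split_ifs with h1 h2 h3
  · push_cast; ring
  · ring
  · push_cast; ring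
  · have : 1 ≤ m := by
      by_contra h
      have : m = 0 := by omega
      subst this
      simp at h3
    push_cast [Nat.cast_sub this]; ring

/-- Label of the boundary component of a point. -/
def label (k m : ℕ) : ℕ := if m < 2 * k ∧ m % 2 = 1 then m / 2 else k

theorem label_le (k m : ℕ) : label k m < k + 1 := by
  unfold label; split_ifs <;> omega

theorem label_zero (k : ℕ) : label k 0 = k := by simp [label]

theorem label_step (k m : ℕ) : label k (faceStep k m) = label k m := by
  by_cases h : m < 2 * k ∧ m % 2 = 1
  · have : faceStep k m = m := by
      unfold faceStep; split_ifs <;> omega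
    rw [this]
  · have : ¬ (faceStep k m < 2 * k ∧ faceStep k m % 2 = 1) := by
      unfold faceStep; split_ifs <;> omega
    unfold label
    rw [if_neg this, if_neg h]

theorem main_rel (n k g m : ℕ) (hkg : k + 2 * g = n) (hm : m < 2 * n)
    (h : ¬ (m < 2 * k ∧ m % 2 = 1)) :
    (Quot.mk (fun i j => (rot n ∘ caravan n k g) i = j) (m : ZMod (2 * n))) =
      Quot.mk _ ((0 : ℕ) : ZMod (2 * n)) := by
  have key : ∀ a b : ℕ, a < 2 * n → faceStep k a = b →
      (Quot.mk (fun i j => (rot n ∘ caravan n k g) i = j) (a : ZMod (2 * n))) =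
      Quot.mk _ (b : ZMod (2 * n)) := by
    intro a b ha hb
    apply Quot.sound
    rw [step_cast n k g a ha, hb]
  induction m using Nat.strong_induction_on with
  | _ m ih =>
    by_cases h0 : m = 0
    · rw [h0]
    by_cases h1 : m ≤ 2 * k
    · rw [← key (m - 2) m (by omega) (by unfold faceStep; split_ifs <;> omega)]
      exact ih _ (by omega) (by omega) (by omega)
    · have hr : (m - 2 * k) % 4 = 0 ∨ (m - 2 * k) % 4 = 1 ∨ (m - 2 * k) % 4 = 2 ∨
        (m - 2 * k) % 4 = 3 := by omega
      rcases hr with hr | hr | hr | hr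
      · rw [← key (m - 3) m (by omega) (by unfold faceStep; split_ifs <;> omega)]
        exact ih _ (by omega) (by omega) (by omega)
      · rw [← key (m + 1) m (by omega) (by unfold faceStep; split_ifs <;> omega),
          ← key (m + 2) (m + 1) (by omega) (by unfold faceStep; split_ifs <;> omega),
          ← key (m - 1) (m + 2) (by omega) (by unfold faceStep; split_ifs <;> omega)]
        exact ih _ (by omega) (by omega) (by omega)
      · rw [← key (m + 1) m (by omega) (by unfold faceStep; split_ifs <;> omega),
          ← key (m - 2) (m + 1) (by omega) (by unfold faceStep; split_ifs <;> omega)]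
        exact ih _ (by omega) (by omega) (by omega)
      · rw [← key (m - 3) m (by omega) (by unfold faceStep; split_ifs <;> omega)]
        exact ih _ (by omega) (by omega) (by omega)

theorem cycles_pos (n k g : ℕ) (hkg : k + 2 * g = n) (hn : 0 < n) :
    cycles (rot n ∘ caravan n k g) = k + 1 := by
  haveI : NeZero (2 * n) := ⟨by omega⟩
  let F : ZMod (2 * n) → Fin (k + 1) := fun a => ⟨label k a.val, label_le k a.val⟩
  have hF : ∀ i j, (rot n ∘ caravan n k g) i = j → F i = F j := by
    intro i j hij
    obtain ⟨m, hm, rfl⟩ : ∃ m : ℕ, m < 2 * n ∧ (m : ZMod (2 * n)) = i :=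
      ⟨i.val, ZMod.val_lt i, ZMod.natCast_zmod_val i⟩
    rw [step_cast n k g m hm] at hij
    subst hij
    apply Fin.ext
    simp only [F, ZMod.val_natCast, Nat.mod_eq_of_lt hm]
    have hle : faceStep k m ≤ 2 * n := by
      unfold faceStep; split_ifs <;> omega
    rcases hle.lt_or_eq with hlt | heq
    · rw [Nat.mod_eq_of_lt hlt]
      exact (label_step k m).symm
    · rw [heq, Nat.mod_self, label_zero, ← label_step, heq]
      exact if_neg (by omega)
  have hb : Function.Bijective (Quot.lift F hF) := by
    constructor
    · rintro ⟨a⟩ ⟨b⟩ hab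
      replace hab : label k a.val = label k b.val := congrArg Fin.val hab
      by_cases ha : a.val < 2 * k ∧ a.val % 2 = 1
      · have : a.val = b.val := by
          unfold label at hab; split_ifs at hab <;> omega
        rw [ZMod.val_injective _ this]
      · have hb : ¬ (b.val < 2 * k ∧ b.val % 2 = 1) := by
          unfold label at hab; split_ifs at hab <;> omega
        have h1 := main_rel n k g a.val hkg (ZMod.val_lt a) ha
        have h2 := main_rel n k g b.val hkg (ZMod.val_lt b) hb
        rw [ZMod.natCast_zmod_val] at h1 h2
        exact h1.trans h2.symm
    · rintro ⟨i, hi⟩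
      by_cases h : i < k
      · refine ⟨Quot.mk _ ((2 * i + 1 : ℕ) : ZMod (2 * n)), Fin.ext ?_⟩
        change label k (ZMod.val ((2 * i + 1 : ℕ) : ZMod (2 * n))) = i
        rw [ZMod.val_cast_of_lt (by omega)]
        unfold label; split_ifs <;> omega
      · refine ⟨Quot.mk _ ((0 : ℕ) : ZMod (2 * n)), Fin.ext ?_⟩
        change label k (ZMod.val ((0 : ℕ) : ZMod (2 * n))) = i
        rw [ZMod.val_cast_of_lt (by omega), label_zero]
        omega
  unfold cycles
  rw [Nat.card_eq_of_bijective _ hb, Nat.card_eq_fintype_card, Fintype.card_fin]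

theorem int_rel (f : ℤ → ℤ)
    (hf : ∀ a, f a = (if a.natAbs % 4 < 2 then a + 2 else a - 2) + 1) (N : ℕ) :
    ∀ a : ℤ, a.natAbs ≤ N → Quot.mk (fun i j => f i = j) a = Quot.mk _ 0 := by
  have key : ∀ a b : ℤ, (if a.natAbs % 4 < 2 then a + 2 else a - 2) + 1 = b →
      Quot.mk (fun i j => f i = j) a = Quot.mk _ b := by
    intro a b h
    exact Quot.sound ((hf a).trans h)
  have hpos : ∀ m : ℕ, Quot.mk (fun i j => f i = j) (m : ℤ) = Quot.mk _ 0 := by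
    intro m
    induction m using Nat.strong_induction_on with
    | _ m ih =>
      by_cases h0 : m = 0
      · rw [h0]; rfl
      have hr : m % 4 = 0 ∨ m % 4 = 1 ∨ m % 4 = 2 ∨ m % 4 = 3 := by omega
      rcases hr with hr | hr | hr | hr
      · rw [← key ((m - 3 : ℕ) : ℤ) m (by split_ifs <;> omega)]
        exact ih _ (by omega)
      · rw [← key ((m + 1 : ℕ) : ℤ) m (by split_ifs <;> omega),
          ← key ((m + 2 : ℕ) : ℤ) ((m + 1 : ℕ) : ℤ) (by split_ifs <;> omega),
          ← key ((m - 1 : ℕ) : ℤ) ((m + 2 : ℕ) : ℤ) (by split_ifs <;> omega)]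
        exact ih _ (by omega)
      · rw [← key ((m + 1 : ℕ) : ℤ) m (by split_ifs <;> omega),
          ← key ((m - 2 : ℕ) : ℤ) ((m + 1 : ℕ) : ℤ) (by split_ifs <;> omega)]
        exact ih _ (by omega)
      · rw [← key ((m - 3 : ℕ) : ℤ) m (by split_ifs <;> omega)]
        exact ih _ (by omega)
  induction N using Nat.strong_induction_on with
  | _ N ih =>
    intro a ha
    by_cases h0 : 0 ≤ a
    · obtain ⟨m, rfl⟩ := Int.eq_ofNat_of_zero_le h0
      exact hpos m
    have hr : a.natAbs % 4 = 0 ∨ a.natAbs % 4 = 1 ∨ a.natAbs % 4 = 2 ∨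
      a.natAbs % 4 = 3 := by omega
    have step : ∀ b : ℤ, b.natAbs < a.natAbs →
        Quot.mk (fun i j => f i = j) b = Quot.mk _ 0 := by
      intro b hb
      exact ih b.natAbs (by omega) b le_rfl
    have h01 : Quot.mk (fun i j => f i = j) 2 = Quot.mk _ 0 := hpos 2
    rcases hr with hr | hr | hr | hr
    · rw [key a (a + 3) (by split_ifs <;> omega)]
      exact step _ (by omega)
    · rw [key a (a + 3) (by split_ifs <;> omega)]
      by_cases h1 : a = -1
      · rw [h1]; exact h01
      · exact step _ (by omega)
    · rw [key a (a - 1) (by split_ifs <;> omega),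
        key (a - 1) (a - 2) (by split_ifs <;> omega),
        key (a - 2) (a + 1) (by split_ifs <;> omega)]
      exact step _ (by omega)
    · rw [key a (a - 1) (by split_ifs <;> omega),
        key (a - 1) (a + 2) (by split_ifs <;> omega)]
      exact step _ (by omega)

theorem cycles_zero : cycles (rot 0 ∘ caravan 0 0 0) = 0 + 1 := by
  have h := int_rel (rot 0 ∘ caravan 0 0 0 : ZMod (2 * 0) → ZMod (2 * 0)) (fun a => rfl)
  unfold cycles
  rw [zero_add, Nat.card_eq_one_iff_unique]
  refine ⟨⟨?_⟩, ⟨Quot.mk _ 0⟩⟩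
  rintro ⟨a⟩ ⟨b⟩
  exact (h _ a le_rfl).trans (h _ b le_rfl).symm

/-- The one-vertex ribbon graph of the caravan `C_{k,g}` is a surface of genus `g`
with `k + 1` boundary components: `c(r ∘ C_{k,g}) = k + 1` and `g(C_{k,g}) = g`. -/
theorem caravan_boundary_and_genus (n k g : ℕ) (hkg : k + 2 * g = n) :
    cycles (rot n ∘ caravan n k g) = k + 1 ∧ genus n (caravan n k g) = g := by
  have h : cycles (rot n ∘ caravan n k g) = k + 1 := by
    rcases Nat.eq_zero_or_pos n with h0 | h0
    · obtain rfl : k = 0 := by omega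
      obtain rfl : g = 0 := by omega
      subst h0
      exact cycles_zero
    · exact cycles_pos n k g hkg h0
  refine ⟨h, ?_⟩
  unfold genus
  rw [h]
  omega
end

section
/- Let σ be the chord diagram of order 3 on ZMod 6 given by σ(i) = i + 3 (three pairwise interlaced chords {0,3}, {1,4}, {2,5}). Then ∂Γ_σ(z) = 8z; that is, every one of the 8 partial duals of σ has genus 1. -/
theorem cycles_eq_card {α : Type*} [Fintype α] [DecidableEq α] (f rep : α → α)
    (h1 : ∀ i, rep (f i) = rep i) (h2 : ∀ i, ∃ k < 6, f^[k] i = rep i) :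
    cycles f = (Finset.univ.image rep).card := by
  unfold cycles
  have hit : ∀ k i, Quot.mk (fun i j => f i = j) (f^[k] i) = Quot.mk _ i := by
    intro k
    induction k with
    | zero => intro i; rfl
    | succ k ih =>
      intro i
      rw [Function.iterate_succ_apply, ih]
      exact (Quot.sound (r := fun i j => f i = j) (a := i) (b := f i) rfl).symm
  have hrep : ∀ i, Quot.mk (fun i j => f i = j) (rep i) = Quot.mk _ i := by
    intro i
    obtain ⟨k, -, hk⟩ := h2 i
    rw [← hk, hit]
  let F : Quot (fun i j => f i = j) → (Finset.univ.image rep : Finset α) :=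
    Quot.lift (fun i => ⟨rep i, Finset.mem_image_of_mem _ (Finset.mem_univ i)⟩) (by
      intro a b hab
      apply Subtype.ext
      change rep a = rep b
      rw [← hab, h1])
  have hF : Function.Bijective F := by
    constructor
    · intro x y
      induction x using Quot.ind with
      | mk x =>
        induction y using Quot.ind with
        | mk y =>
          intro h
          have h' : rep x = rep y := congrArg Subtype.val h
          rw [← hrep x, ← hrep y, h']
    · rintro ⟨y, hy⟩
      obtain ⟨x, -, rfl⟩ := Finset.mem_image.1 hy
      exact ⟨Quot.mk _ x, rfl⟩
  rw [Nat.card_eq_of_bijective F hF, Nat.card_eq_fintype_card, Fintype.card_coe]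

/-- The map `rot ∘ σ_A`, computably, with `A` given by a Boolean per chord. -/
def stepMap (a b c : Bool) (i : ZMod 6) : ZMod 6 :=
  (if (match i.val % 3 with | 0 => a | 1 => b | _ => c) = true then i + 3 else i) + 1

/-- Smallest element of the orbit. -/
def orbitRep (f : ZMod 6 → ZMod 6) (i : ZMod 6) : ZMod 6 :=
  ((((List.range 6).map (fun k => (f^[k] i).val)).foldr min 6 : ℕ) : ZMod 6)

theorem cycles_stepMap (a b c : Bool) :
    cycles (stepMap a b c) = if (a ^^ b ^^ c) = true then 2 else 1 := by
  rw [cycles_eq_card (stepMap a b c) (orbitRep (stepMap a b c))]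
  · revert a b c; decide +kernel
  · revert a b c; decide +kernel
  · revert a b c; decide +kernel

theorem step_eq (σ : ZMod 6 → ZMod 6) (hσ : ∀ i, σ i = i + 3) (A : Set (ZMod 6))
    (a b c : Bool) (hA : ∀ i : ZMod 6, i ∈ A ↔
      (match i.val % 3 with | 0 => a | 1 => b | _ => c) = true) :
    (rot 3 ∘ restrictTo σ A : ZMod 6 → ZMod 6) = stepMap a b c := by
  funext i
  change restrictTo σ A i + 1 = _
  simp only [restrictTo, stepMap, hA, hσ]

theorem pdGenus_eq_one (σ : ZMod 6 → ZMod 6) (hσ : ∀ i, σ i = i + 3) (A : Set (ZMod 6))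
    (h : ∀ i ∈ A, σ i ∈ A) : pdGenus 3 σ A = 1 := by
  classical
  have h' : ∀ i, i + 3 ∈ A ↔ i ∈ A := by
    intro i
    constructor
    · intro hi
      have := h _ hi
      rw [hσ, add_assoc, show (3 + 3 : ZMod 6) = 0 from rfl, add_zero] at this
      exact this
    · intro hi
      rw [← hσ]; exact h _ hi
  have h0 : (3 : ZMod 6) ∈ A ↔ (0 : ZMod 6) ∈ A := h' 0
  have h1 : (4 : ZMod 6) ∈ A ↔ (1 : ZMod 6) ∈ A := h' 1
  have h2 : (5 : ZMod 6) ∈ A ↔ (2 : ZMod 6) ∈ A := h' 2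
  have e1 := step_eq σ hσ A (decide ((0 : ZMod 6) ∈ A)) (decide ((1 : ZMod 6) ∈ A))
    (decide ((2 : ZMod 6) ∈ A)) (by
      have key : ∀ i : ZMod 6, i = 0 ∨ i = 1 ∨ i = 2 ∨ i = 3 ∨ i = 4 ∨ i = 5 := by decide
      intro i
      rcases key i with rfl | rfl | rfl | rfl | rfl | rfl
      · exact (decide_eq_true_iff).symm
      · exact (decide_eq_true_iff).symm
      · exact (decide_eq_true_iff).symm
      · exact h0.trans (decide_eq_true_iff).symm
      · exact h1.trans (decide_eq_true_iff).symm
      · exact h2.trans (decide_eq_true_iff).symm)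
  have e2 := step_eq σ hσ Aᶜ (decide ((0 : ZMod 6) ∉ A)) (decide ((1 : ZMod 6) ∉ A))
    (decide ((2 : ZMod 6) ∉ A)) (by
      have key : ∀ i : ZMod 6, i = 0 ∨ i = 1 ∨ i = 2 ∨ i = 3 ∨ i = 4 ∨ i = 5 := by decide
      intro i
      rcases key i with rfl | rfl | rfl | rfl | rfl | rfl
      · exact (decide_eq_true_iff).symm
      · exact (decide_eq_true_iff).symm
      · exact (decide_eq_true_iff).symm
      · exact (not_congr h0).trans (decide_eq_true_iff).symm
      · exact (not_congr h1).trans (decide_eq_true_iff).symm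
      · exact (not_congr h2).trans (decide_eq_true_iff).symm)
  have c1 := (congrArg cycles e1).trans (cycles_stepMap _ _ _)
  have c2 := (congrArg cycles e2).trans (cycles_stepMap _ _ _)
  have d : pdGenus 3 σ A = (3 + 2 - cycles (rot 3 ∘ restrictTo σ A : ZMod 6 → ZMod 6)
    - cycles (rot 3 ∘ restrictTo σ Aᶜ : ZMod 6 → ZMod 6)) / 2 := rfl
  rw [d, c1, c2]
  by_cases p0 : (0 : ZMod 6) ∈ A <;> by_cases p1 : (1 : ZMod 6) ∈ A <;>
    by_cases p2 : (2 : ZMod 6) ∈ A <;> simp [p0, p1, p2]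

open Polynomial in
/-- For the chord diagram of order 3 with three pairwise interlaced chords
`{0,3}, {1,4}, {2,5}`, the partial-dual genus polynomial is `8z`. -/
theorem pdPoly_three_interlaced (σ : ZMod 6 → ZMod 6) (hσ : ∀ i, σ i = i + 3) :
    pdPoly 3 σ = 8 * X := by
  obtain rfl : σ = fun i => i + 3 := funext hσ
  unfold pdPoly
  rw [dif_neg (by norm_num)]
  rw [Finset.sum_congr rfl (g := fun _ => (X : ℤ[X])) (by
    intro A hA
    have hA' := (Finset.mem_filter.1 hA).2
    have := pdGenus_eq_one _ hσ (↑A : Set (ZMod 6)) (fun i hi => hA' i hi)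
    exact (congrArg (fun k => (X : ℤ[X]) ^ k) this).trans (pow_one _))]
  rw [Finset.sum_const]
  have hc : (Finset.univ.filter
      (fun A : Finset (ZMod 6) => ∀ i ∈ A, i + 3 ∈ A)).card = 8 := by decide +kernel
  have := congrArg (fun k : ℕ => k • (X : ℤ[X])) hc
  refine Eq.trans ?_ (this.trans ?_)
  · congr!
  · simp
end

section
/- Let σ be the chord diagram of order 4 on ZMod 8 given by σ(i) = i + 4 (four pairwise interlaced chords; interlace sequence (3,3,3,3)). Then ∂Γ_σ(z) = 8z + 8z². -/
/-- Counting cycles through a computable choice of orbit representatives. -/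
theorem cycles_eq_card_image (f rep : Fin 8 → Fin 8) (h1 : ∀ i, rep (f i) = rep i)
    (h2 : ∀ i, ∃ n : Fin 8, f^[n.val] i = rep i) :
    cycles f = (Finset.univ.image rep).card := by
  have hq : ∀ (n : ℕ) (i : Fin 8),
      Quot.mk (fun i j => f i = j) i = Quot.mk (fun i j => f i = j) (f^[n] i) := by
    intro n
    induction n with
    | zero => intro i; rfl
    | succ n ih =>
      intro i
      rw [Function.iterate_succ_apply, ← ih (f i)]
      exact Quot.sound rfl
  let F : Quot (fun i j => f i = j) → (Finset.univ.image rep : Finset (Fin 8)) :=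
    Quot.lift (fun i => ⟨rep i, Finset.mem_image_of_mem rep (Finset.mem_univ i)⟩) (by
      intro a b hab
      subst hab
      exact Subtype.ext (h1 a).symm)
  have hF : Function.Bijective F := by
    constructor
    · intro x y
      induction x using Quot.ind with | _ a
      induction y using Quot.ind with | _ b
      intro h
      have h' : rep a = rep b := congrArg Subtype.val h
      obtain ⟨n, hn⟩ := h2 a
      obtain ⟨m, hm⟩ := h2 b
      rw [hq n.val a, hq m.val b, hn, hm, h']
    · rintro ⟨y, hy⟩
      obtain ⟨a, -, rfl⟩ := Finset.mem_image.1 hy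
      exact ⟨Quot.mk _ a, rfl⟩
  unfold cycles
  rw [Nat.card_congr (Equiv.ofBijective F hF), Nat.card_eq_fintype_card, Fintype.card_coe]

/-- The antipodal map. -/
def opp4 : Fin 8 → Fin 8 := fun i => i + 4

/-- The permutation `r ∘ σ_A`, computably. -/
def step4 (A : Finset (Fin 8)) (i : Fin 8) : Fin 8 := if i ∈ A then i + 4 + 1 else i + 1

/-- The least element of the orbit of `i`. -/
def rep4 (A : Finset (Fin 8)) (i : Fin 8) : Fin 8 :=
  (List.range 8).foldr (fun n a => min ((step4 A)^[n] i) a) i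

theorem step4_facts : ∀ A : Finset (Fin 8), (∀ i ∈ A, i + 4 ∈ A) →
    (∀ i, rep4 A (step4 A i) = rep4 A i) ∧
    (∀ i, ∃ n : Fin 8, (step4 A)^[n.val] i = rep4 A i) ∧
    (Finset.univ.image (rep4 A)).card = (if A.card % 4 = 0 then 1 else 2) ∧
    (∀ i ∈ Aᶜ, i + 4 ∈ Aᶜ) ∧ (Aᶜ.card % 4 = 0 ↔ A.card % 4 = 0) := by
  decide +kernel

theorem cycles_step4 (A : Finset (Fin 8)) (hA : ∀ i ∈ A, i + 4 ∈ A) :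
    cycles (step4 A) = if A.card % 4 = 0 then 1 else 2 := by
  obtain ⟨h1, h2, h3, -⟩ := step4_facts A hA
  rw [cycles_eq_card_image _ _ h1 h2, h3]

theorem rot_restrict (A : Finset (Fin 8)) (B : Set (Fin 8)) (hB : B = ↑A) :
    (rot 4 ∘ restrictTo opp4 B : Fin 8 → Fin 8) = step4 A := by
  subst hB
  funext i
  by_cases h : i ∈ A
  · simp only [Function.comp, restrictTo, step4, Finset.mem_coe, h, if_true]; rfl
  · simp only [Function.comp, restrictTo, step4, Finset.mem_coe, h, if_false]; rfl

theorem pdGenus_four (A : Finset (Fin 8)) (hA : ∀ i ∈ A, i + 4 ∈ A) :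
    pdGenus 4 opp4 (↑A : Set (Fin 8)) =
      if A.card % 4 = 0 then 2 else 1 := by
  obtain ⟨-, -, -, h4, h5⟩ := step4_facts A hA
  have e1 := cycles_step4 A hA
  have e2 := cycles_step4 Aᶜ h4
  rw [← rot_restrict A _ rfl] at e1
  rw [← rot_restrict Aᶜ (↑A : Set (Fin 8))ᶜ (by simp)] at e2
  simp only [h5] at e2
  have : pdGenus 4 opp4 (↑A : Set (Fin 8)) =
      (4 + 2 - (if A.card % 4 = 0 then 1 else 2) - (if A.card % 4 = 0 then 1 else 2)) / 2 := by
    exact congrArg₂ (fun a b => (4 + 2 - a - b) / 2) e1 e2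
  rw [this]
  split_ifs <;> rfl

theorem card_even4 : ((Finset.univ.filter
    (fun A : Finset (Fin 8) => ∀ i ∈ A, i + 4 ∈ A)).filter (fun A => A.card % 4 = 0)).card = 8 := by
  decide +kernel

theorem card_odd4 : ((Finset.univ.filter
    (fun A : Finset (Fin 8) => ∀ i ∈ A, i + 4 ∈ A)).filter (fun A => ¬ A.card % 4 = 0)).card = 8 := by
  decide +kernel

open Polynomial in
theorem sum_four : ∑ A ∈ Finset.univ.filter (fun A : Finset (Fin 8) => ∀ i ∈ A, i + 4 ∈ A),
    (X : Polynomial ℤ) ^ pdGenus 4 opp4 (↑A : Set (Fin 8)) =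
      8 * X + 8 * X ^ 2 := by
  have : ∀ A ∈ Finset.univ.filter (fun A : Finset (Fin 8) => ∀ i ∈ A, i + 4 ∈ A),
      (X : Polynomial ℤ) ^ pdGenus 4 opp4 (↑A : Set (Fin 8)) =
        if A.card % 4 = 0 then X ^ 2 else X := by
    intro A hA
    rw [pdGenus_four A (Finset.mem_filter.1 hA).2]
    split_ifs <;> simp
  rw [Finset.sum_congr rfl this, Finset.sum_ite, Finset.sum_const, Finset.sum_const,
    card_even4, card_odd4]
  simp only [nsmul_eq_mul]
  push_cast
  ring

open Polynomial in
/-- For the chord diagram of order 4 with four pairwise interlaced chords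
(`σ i = i + 4` on `ZMod 8`), the partial-dual genus polynomial is `8z + 8z²`. -/
theorem pdPoly_four_interlaced (σ : ZMod 8 → ZMod 8) (hσ : ∀ i, σ i = i + 4) :
    pdPoly 4 σ = 8 * X + 8 * X ^ 2 := by
  obtain rfl : σ = fun i => i + 4 := funext hσ
  rw [← sum_four]
  unfold pdPoly
  rw [dif_neg (by norm_num)]
  refine Finset.sum_bij (fun A _ => A) ?_ (fun _ _ _ _ h => h) ?_ (fun _ _ => rfl)
  · intro A hA
    exact Finset.mem_filter.2 ⟨Finset.mem_univ _, (Finset.mem_filter.1 hA).2⟩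
  · intro A hA
    exact ⟨A, Finset.mem_filter.2 ⟨Finset.mem_univ _, (Finset.mem_filter.1 hA).2⟩, rfl⟩
end
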